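/- Let x, y, z be real numbers with 2/3 <= x < 1, 0 <= y < 1 and 0 <= z < 1. Then floor(3x) - floor(y+z) - floor(3x - y - z) - floor(y - x) - floor(z - x) >= 1. -/

import Mathlib

/-!
By superadditivity of the floor, `⌊3x⌋ ≥ ⌊y + z⌋ + ⌊3x - y - z⌋`, while `⌊y - x⌋` and `⌊z - x⌋`
are nonpositive. If `y < x` or `z < x`, one of the latter is negative, which gives the missing unit.
Otherwise `3x - y - z ≤ x < 1`, so that `⌊3x - y - z⌋ ≤ 0`, and the unit comes from
`⌊3x⌋ ≥ 2 > ⌊y + z⌋`. For `n ≥ 1` variables in place of `y, z`, the same argument works with `3`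
replaced by `n + 1` and `2/3` by `n/(n + 1)`.
-/

section FloorRing

open Finset

variable {ι R : Type*} [CommRing R] [LinearOrder R] [IsStrictOrderedRing R] [FloorRing R]
  {s : Finset ι} {x : R} {y : ι → R}

lemma floor_add_floor_sub_le_floor (a b : R) : ⌊a⌋ + ⌊b - a⌋ ≤ ⌊b⌋ := by
  simpa only [add_sub_cancel] using Int.le_floor_add a (b - a)

lemma floor_sub_nonpos {a b : R} (ha : a < 1) (hb : 0 ≤ b) : ⌊a - b⌋ ≤ 0 :=
  Int.floor_le_iff.2 (by simpa using (sub_le_self a hb).trans_lt ha)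

lemma sum_floor_sub_nonpos (hx : 0 ≤ x) (hy : ∀ i ∈ s, y i < 1) :
    ∑ i ∈ s, ⌊y i - x⌋ ≤ 0 :=
  sum_nonpos fun i hi ↦ floor_sub_nonpos (hy i hi) hx

lemma sum_floor_sub_neg (hx : 0 ≤ x) (hy : ∀ i ∈ s, y i < 1) (hlt : ∃ i ∈ s, y i < x) :
    ∑ i ∈ s, ⌊y i - x⌋ < 0 := by
  obtain ⟨i, hi, hix⟩ := hlt
  exact sum_neg' (fun j hj ↦ floor_sub_nonpos (hy j hj) hx)
    ⟨i, hi, Int.floor_lt_zero.2 (sub_neg.2 hix)⟩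

lemma floor_sum_lt_card (hs : s.Nonempty) (hy : ∀ i ∈ s, y i < 1) :
    ⌊∑ i ∈ s, y i⌋ < #s :=
  Int.floor_lt.2 (by simpa using sum_lt_sum_of_nonempty hs hy)

lemma floor_card_add_one_mul_sub_sum_nonpos (hx : x < 1) (hxy : ∀ i ∈ s, x ≤ y i) :
    ⌊(#s + 1) * x - ∑ i ∈ s, y i⌋ ≤ 0 := by
  have hsum : #s * x ≤ ∑ i ∈ s, y i := by simpa using card_nsmul_le_sum s y x hxy
  exact Int.floor_le_iff.2 (by push_cast; linarith)

theorem stmt_6_general (hs : s.Nonempty) (hx : #s ≤ (#s + 1) * x) (hy : ∀ i ∈ s, y i < 1) :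
    1 ≤ ⌊(#s + 1) * x⌋ - ⌊∑ i ∈ s, y i⌋ - ⌊(#s + 1) * x - ∑ i ∈ s, y i⌋
      - ∑ i ∈ s, ⌊y i - x⌋ := by
  have hx0 : 0 ≤ x := nonneg_of_mul_nonneg_right ((Nat.cast_nonneg _).trans hx) (by positivity)
  by_cases hlt : ∃ i ∈ s, y i < x
  · have hsuper := floor_add_floor_sub_le_floor (∑ i ∈ s, y i) ((#s + 1) * x)
    have hneg := sum_floor_sub_neg hx0 hy hlt
    linarith
  · push Not at hlt
    obtain ⟨i, hi⟩ := hs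
    have hcard : (#s : ℤ) ≤ ⌊(#s + 1) * x⌋ := Int.le_floor.2 (mod_cast hx)
    have hsum := floor_sum_lt_card ⟨i, hi⟩ hy
    have hdiff := floor_card_add_one_mul_sub_sum_nonpos ((hlt i hi).trans_lt (hy i hi)) hlt
    have hnonpos := sum_floor_sub_nonpos hx0 hy
    linarith

end FloorRing

theorem stmt_6 (x y z : ℝ) (hx1 : 2 / 3 ≤ x) (hx2 : x < 1)
    (hy1 : 0 ≤ y) (hy2 : y < 1) (hz1 : 0 ≤ z) (hz2 : z < 1) :
    1 ≤ ⌊3 * x⌋ - ⌊y + z⌋ - ⌊3 * x - y - z⌋ - ⌊y - x⌋ - ⌊z - x⌋ := by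
  have h := stmt_6_general (s := Finset.univ) (x := x) (y := ![y, z]) Finset.univ_nonempty
    (by norm_num; linarith) (by simp [hy2, hz2])
  have three_eq : (2 + 1 : ℝ) = 3 := by norm_num
  simpa [three_eq, ← sub_sub] using h
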